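/- arXiv:1808.09312 — 2 statements merged into one kernel-verified Lean document; each statement's English description precedes it below -/
import Mathlib

section
/- Let Ξ be a finite polytopal complex in ℝ^d and let Q ⊆ ℝ^d be an open convex set. Then the union of those members of Ξ that are disjoint from Q is a strong deformation retract of (⋃Ξ) \ Q. -/
/-- `A` is a strong deformation retract of `B`. -/
def IsStrongDeformationRetract {E : Type*} [TopologicalSpace E] (A B : Set E) : Prop :=
  A ⊆ B ∧ ∃ H : C(↥B × ↥unitInterval, ↥B),
    (∀ b : B, H (b, 0) = b) ∧
    (∀ b : B, (b : E) ∈ A → ∀ t, H (b, t) = b) ∧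
    (∀ b : B, ((H (b, 1) : E) ∈ A))

/-- A polytope is the convex hull of a finite set of points. -/
def IsPolytope {E : Type*} [AddCommGroup E] [Module ℝ E] (P : Set E) : Prop :=
  ∃ S : Finset E, P = convexHull ℝ (S : Set E)

/-- A finite polytopal complex: a finite collection of polytopes closed under taking
(exposed) faces, such that the intersection of any two members is a face of each. -/
def IsPolytopalComplex {d : ℕ} (Ξ : Finset (Set (EuclideanSpace ℝ (Fin d)))) : Prop :=
  (∀ P ∈ Ξ, IsPolytope P) ∧
  (∀ P ∈ Ξ, ∀ F : Set (EuclideanSpace ℝ (Fin d)), IsExposed ℝ P F → F ∈ Ξ) ∧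
  (∀ P ∈ Ξ, ∀ P' ∈ Ξ, IsExposed ℝ P (P ∩ P') ∧ IsExposed ℝ P' (P ∩ P'))

/-!
Remove the members of `Ξ` that meet `Q` one at a time, always taking one that is maximal for
inclusion. Such a maximal `P` meets the rest of the complex exactly in its relative boundary, and
since `Q` is open it contains a relative interior point `q` of `P`. Pushing `P \ Q` radially away
from `q` retracts it onto the relative boundary minus `Q`, and because `Q` is star-shaped about `q`
the motion never enters `Q`; the rest of the complex stays fixed.
-/

open Set Topology
open scoped unitInterval

namespace IsStrongDeformationRetract

variable {E F : Type*} [TopologicalSpace E] [TopologicalSpace F] {A B C : Set E}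

theorem refl (A : Set E) : IsStrongDeformationRetract A A :=
  ⟨Subset.rfl, ⟨Prod.fst, continuous_fst⟩, fun _ => rfl, fun _ _ _ => rfl, Subtype.prop⟩

theorem trans (hAB : IsStrongDeformationRetract A B) (hBC : IsStrongDeformationRetract B C) :
    IsStrongDeformationRetract A C := by
  obtain ⟨hAB, G, hG0, hGA, hG1⟩ := hAB
  obtain ⟨hBC, H, hH0, hHB, hH1⟩ := hBC
  let r : C(C, B) := ⟨fun c => ⟨H (c, 1), hH1 c⟩, by fun_prop⟩
  let s : C(B, B) := ⟨fun b => G (b, 1), by fun_prop⟩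
  let i : C(B, C) := ⟨inclusion hBC, continuous_inclusion hBC⟩
  have r_apply {c : C} (hc : (c : E) ∈ A) : r c = ⟨c, hAB hc⟩ :=
    Subtype.ext (congrArg ((↑) : C → E) (hHB c (hAB hc) 1))
  let toB : (ContinuousMap.id C).HomotopyRel (i.comp r) {c | (c : E) ∈ A} :=
    { toFun := fun p => H (p.2, p.1)
      map_zero_left := hH0
      map_one_left := fun _ => rfl
      prop' := fun t c hc => hHB c (hAB hc) t }
  let toA : (i.comp r).HomotopyRel (i.comp (s.comp r)) {c | (c : E) ∈ A} :=
    { toFun := fun p => i (G (r p.2, p.1))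
      map_zero_left := fun c => congrArg i (hG0 (r c))
      map_one_left := fun _ => rfl
      prop' := fun t c hc => congrArg i (hGA (r c) (by rwa [r_apply hc]) t) }
  let K := toB.trans toA
  refine ⟨hAB.trans hBC, ⟨fun p => K (p.2, p.1), by fun_prop⟩, K.apply_zero,
    fun c hc t => K.eq_fst t hc, fun c => ?_⟩
  exact (congrArg ((↑) : C → E) (K.apply_one c)).symm ▸ hG1 (r c)

theorem iff_exists_continuousOn : IsStrongDeformationRetract A B ↔
    A ⊆ B ∧ ∃ h : E × I → E, ContinuousOn h (B ×ˢ univ) ∧ (∀ x ∈ B, ∀ t, h (x, t) ∈ B) ∧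
      (∀ x ∈ B, h (x, 0) = x) ∧ (∀ x ∈ A, ∀ t, h (x, t) = x) ∧ ∀ x ∈ B, h (x, 1) ∈ A := by
  classical
  constructor
  · rintro ⟨hAB, H, hH0, hHA, hH1⟩
    let h : E × I → E := fun p => if hp : p.1 ∈ B then H (⟨p.1, hp⟩, p.2) else p.1
    have h_apply (x : B) (t : I) : h (x, t) = H (x, t) := dif_pos x.2
    refine ⟨hAB, h, ?_, fun x hx t => ?_, fun x hx => ?_, fun x hx t => ?_, fun x hx => ?_⟩
    · have hH : Continuous fun p : B ×ˢ (univ : Set I) => (H (⟨p.1.1, p.2.1⟩, p.1.2) : E) := by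
        fun_prop
      exact continuousOn_iff_continuous_domRestrict.2
        (hH.congr fun p => (h_apply ⟨p.1.1, p.2.1⟩ p.1.2).symm)
    · exact h_apply ⟨x, hx⟩ t ▸ Subtype.prop _
    · rw [h_apply ⟨x, hx⟩, hH0]
    · rw [h_apply ⟨x, hAB hx⟩, hHA _ hx]
    · exact h_apply ⟨x, hx⟩ 1 ▸ hH1 _
  · rintro ⟨hAB, h, hcont, hB, h0, hA, h1⟩
    have hres : Continuous fun p : B × I => h (p.1, p.2) :=
      hcont.comp_continuous (by fun_prop) fun p => ⟨p.1.2, mem_univ _⟩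
    exact ⟨hAB, ⟨fun p => ⟨h (p.1, p.2), hB p.1 p.1.2 p.2⟩, hres.subtype_mk _⟩,
      fun b => Subtype.ext (h0 b b.2), fun b hb t => Subtype.ext (hA b hb t), fun b => h1 b b.2⟩

theorem image (h : IsStrongDeformationRetract A B) {f : E → F} (hf : IsEmbedding f) :
    IsStrongDeformationRetract (f '' A) (f '' B) := by
  obtain ⟨hAB, H, hH0, hHA, hH1⟩ := h
  let e : B ≃ₜ f '' B := hf.homeomorphImage B
  have mem_A (y : f '' B) (hy : (y : F) ∈ f '' A) : (e.symm y : E) ∈ A := by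
    have apply_symm : f (e.symm y) = y := congrArg Subtype.val (e.apply_symm_apply y)
    rwa [← hf.injective.mem_set_image, apply_symm]
  refine ⟨image_mono hAB, ⟨fun p => e (H (e.symm p.1, p.2)), by fun_prop⟩,
    fun y => ?_, fun y hy t => ?_, fun y => mem_image_of_mem f (hH1 (e.symm y))⟩
  · simp only [ContinuousMap.coe_mk, hH0, e.apply_symm_apply]
  · simp only [ContinuousMap.coe_mk, hHA _ (mem_A y hy), e.apply_symm_apply]

theorem union_of_isClosed (h : IsStrongDeformationRetract A B) (hB : IsClosed B)
    (hC : IsClosed C) (hBC : B ∩ C = A) : IsStrongDeformationRetract C (B ∪ C) := by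
  classical
  obtain ⟨-, h, hcont, hmaps, h0, hA, h1⟩ := iff_exists_continuousOn.1 h
  let k : E × I → E := fun p => if p.1 ∈ B then h p else p.1
  have k_of_mem {x : E} (hx : x ∈ B) (t : I) : k (x, t) = h (x, t) := if_pos hx
  have k_fix {x : E} (hx : x ∈ C) (t : I) : k (x, t) = x := by
    by_cases hxB : x ∈ B
    · rw [k_of_mem hxB, hA x (hBC ▸ ⟨hxB, hx⟩)]
    · exact if_neg hxB
  refine iff_exists_continuousOn.2 ⟨subset_union_right, k, ?_, ?_, ?_, fun x => k_fix, ?_⟩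
  · rw [union_prod]
    exact (hcont.congr fun p hp => k_of_mem hp.1 p.2).union_of_isClosed
      (continuousOn_fst.congr fun p hp => k_fix hp.1 p.2)
      (hB.prod isClosed_univ) (hC.prod isClosed_univ)
  · rintro x (hx | hx) t
    · exact k_of_mem hx t ▸ Or.inl (hmaps x hx t)
    · exact (k_fix hx t).symm ▸ Or.inr hx
  · rintro x (hx | hx)
    · rw [k_of_mem hx, h0 x hx]
    · exact k_fix hx 0
  · rintro x (hx | hx)
    · exact k_of_mem hx 1 ▸ (hBC.superset (h1 x hx)).2
    · exact (k_fix hx 1).symm ▸ hx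

end IsStrongDeformationRetract

section Radial

variable {V : Type*} [AddCommGroup V] [Module ℝ V] {K U : Set V} {x : V}

theorem lineMap_smul_notMem_of_starConvex_zero (hU : StarConvex ℝ 0 U) (hx : x ∉ U) {c : ℝ}
    (hc : 1 ≤ c) {t : ℝ} (ht : 0 ≤ t) : AffineMap.lineMap x (c • x) t ∉ U := by
  intro hmem
  have hs : 1 ≤ 1 + t * (c - 1) := by nlinarith
  have hline : AffineMap.lineMap x (c • x) t = (1 + t * (c - 1)) • x := by
    rw [AffineMap.lineMap_apply_module]
    module
  have := hU.smul_mem (hline ▸ hmem) (inv_nonneg.2 (zero_le_one.trans hs))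
    (inv_le_one_of_one_le₀ hs)
  rw [inv_smul_smul₀ (zero_lt_one.trans_le hs).ne'] at this
  exact hx this

variable [TopologicalSpace V] [IsTopologicalAddGroup V] [ContinuousSMul ℝ V]

theorem inv_gauge_smul_mem_frontier (hK : Convex ℝ K) (hK0 : K ∈ 𝓝 0) (hx : gauge K x ≠ 0) :
    (gauge K x)⁻¹ • x ∈ frontier K := by
  rw [← gauge_eq_one_iff_mem_frontier hK hK0, gauge_smul_of_nonneg (inv_nonneg.2 (gauge_nonneg x)),
    smul_eq_mul, inv_mul_cancel₀ hx]

theorem isStrongDeformationRetract_frontier_sdiff [T1Space V] (hK : Convex ℝ K)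
    (hKcl : IsClosed K) (hKb : Bornology.IsVonNBounded ℝ K) (hK0 : K ∈ 𝓝 0)
    (hU : StarConvex ℝ 0 U) (hU0 : 0 ∈ U) :
    IsStrongDeformationRetract (frontier K \ U) (K \ U) := by
  let π : V → V := fun x => (gauge K x)⁻¹ • x
  have gauge_ne_zero {x : V} (hx : x ∈ K \ U) : gauge K x ≠ 0 :=
    ((gauge_pos (absorbent_nhds_zero hK0) hKb).2 fun h => hx.2 (by rwa [h])).ne'
  have one_le_inv_gauge {x : V} (hx : x ∈ K \ U) : 1 ≤ (gauge K x)⁻¹ :=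
    (one_le_inv₀ ((gauge_nonneg x).lt_of_ne' (gauge_ne_zero hx))).2 (gauge_le_one_of_mem hx.1)
  have π_mem {x : V} (hx : x ∈ K \ U) : π x ∈ frontier K :=
    inv_gauge_smul_mem_frontier hK hK0 (gauge_ne_zero hx)
  have lineMap_notMem {x : V} (hx : x ∈ K \ U) (t : I) :
      AffineMap.lineMap x (π x) (t : ℝ) ∉ U :=
    lineMap_smul_notMem_of_starConvex_zero hU hx.2 (one_le_inv_gauge hx) t.2.1
  have π_cont : ContinuousOn π (K \ U) :=
    ((continuous_gauge hK hK0).continuousOn.inv₀ fun _ => gauge_ne_zero).smul continuousOn_id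
  refine IsStrongDeformationRetract.iff_exists_continuousOn.2
    ⟨sdiff_subset_sdiff_left hKcl.frontier_subset,
      fun p => AffineMap.lineMap p.1 (π p.1) (p.2 : ℝ), ?_, fun x hx t => ?_, fun x _ => ?_,
      fun x hx t => ?_, fun x hx => ?_⟩
  · have π_fst_cont : ContinuousOn (fun p : V × I => π p.1) ((K \ U) ×ˢ univ) :=
      π_cont.comp continuousOn_fst fun _ hp => hp.1
    have hval : Continuous fun p : V × I => (p.2 : ℝ) := continuous_subtype_val.comp continuous_snd
    simp only [AffineMap.lineMap_apply_module]
    exact ((continuous_const.sub hval).continuousOn.smul continuousOn_fst).add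
      (hval.continuousOn.smul π_fst_cont)
  · exact ⟨hK.lineMap_mem hx.1 (hKcl.frontier_subset (π_mem hx)) t.2, lineMap_notMem hx t⟩
  · exact AffineMap.lineMap_apply_zero _ _
  · have π_fix : π x = x := by
      simp only [π, (gauge_eq_one_iff_mem_frontier hK hK0).2 hx.1, inv_one, one_smul]
    simp only [π_fix, AffineMap.lineMap_same_apply]
  · refine ⟨?_, lineMap_notMem hx 1⟩
    simpa only [Icc.coe_one, AffineMap.lineMap_apply_one] using π_mem hx

end Radial

section IntrinsicInterior

variable {E : Type*} [NormedAddCommGroup E] [NormedSpace ℝ E] {P F : Set E}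

/-- The affine isometry `v ↦ v + q` onto the affine span of `P`, used to turn statements about the
intrinsic interior and frontier of `P` into statements about a set with nonempty interior. -/
noncomputable def affineSpanChart (q : affineSpan ℝ P) :
    (affineSpan ℝ P).direction →ᵃⁱ[ℝ] E :=
  haveI : Nonempty (affineSpan ℝ P) := ⟨q⟩
  (affineSpan ℝ P).subtypeₐᵢ.comp (AffineIsometryEquiv.vaddConst ℝ q).toAffineIsometry

variable (q : affineSpan ℝ P)

theorem affineSpanChart_apply (v : (affineSpan ℝ P).direction) :
    affineSpanChart q v = v + q :=
  rfl

theorem affineSpanChart_zero : affineSpanChart q 0 = q :=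
  zero_add (q : E)

theorem image_affineSpanChart_preimage : affineSpanChart q '' (affineSpanChart q ⁻¹' P) = P := by
  refine image_preimage_eq_of_subset fun x hx => ?_
  exact ⟨⟨x - q, AffineSubspace.vsub_mem_direction (mem_affineSpan ℝ hx) q.2⟩,
    sub_add_cancel x (q : E)⟩

theorem image_affineSpanChart_interior :
    affineSpanChart q '' interior (affineSpanChart q ⁻¹' P) = intrinsicInterior ℝ P := by
  have : Nonempty (affineSpan ℝ P) := ⟨q⟩
  let e := (AffineIsometryEquiv.vaddConst ℝ q).toHomeomorph
  calc affineSpanChart q '' interior (affineSpanChart q ⁻¹' P)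
      = (↑) '' (e '' interior (e ⁻¹' ((↑) ⁻¹' P))) := by
        rw [image_image]; rfl
    _ = intrinsicInterior ℝ P := by
      rw [← e.preimage_interior, e.image_preimage, intrinsicInterior]

theorem image_affineSpanChart_frontier :
    affineSpanChart q '' frontier (affineSpanChart q ⁻¹' P) = intrinsicFrontier ℝ P := by
  have : Nonempty (affineSpan ℝ P) := ⟨q⟩
  let e := (AffineIsometryEquiv.vaddConst ℝ q).toHomeomorph
  calc affineSpanChart q '' frontier (affineSpanChart q ⁻¹' P)
      = (↑) '' (e '' frontier (e ⁻¹' ((↑) ⁻¹' P))) := by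
        rw [image_image]; rfl
    _ = intrinsicFrontier ℝ P := by
      rw [← e.preimage_frontier, e.image_preimage, intrinsicFrontier]

theorem convex_affineSpanChart_preimage (hP : Convex ℝ P) :
    Convex ℝ (affineSpanChart q ⁻¹' P) :=
  hP.affine_preimage (affineSpanChart q).toAffineMap

variable {q}

theorem affineSpanChart_preimage_mem_nhds (hq : (q : E) ∈ intrinsicInterior ℝ P) :
    affineSpanChart q ⁻¹' P ∈ 𝓝 0 := by
  rwa [← mem_interior_iff_mem_nhds, ← (affineSpanChart q).injective.mem_set_image,
    image_affineSpanChart_interior, affineSpanChart_zero]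

theorem nonempty_intrinsicInterior [FiniteDimensional ℝ (affineSpan ℝ P).direction]
    (hP : Convex ℝ P) (hne : P.Nonempty) : (intrinsicInterior ℝ P).Nonempty := by
  obtain ⟨q, hq⟩ := hne
  lift q to affineSpan ℝ P using mem_affineSpan ℝ hq
  have zero_mem : 0 ∈ affineSpanChart q ⁻¹' P := by rwa [mem_preimage, affineSpanChart_zero]
  have := (Set.Nonempty.intrinsicInterior (convex_affineSpanChart_preimage q hP)
    ⟨0, zero_mem⟩).image (affineSpanChart q)
  rwa [← AffineIsometry.intrinsicInterior_image, image_affineSpanChart_preimage] at this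

theorem subset_closure_intrinsicInterior (hP : Convex ℝ P)
    (hint : (intrinsicInterior ℝ P).Nonempty) : P ⊆ closure (intrinsicInterior ℝ P) := by
  obtain ⟨q, hq⟩ := hint
  lift q to affineSpan ℝ P using mem_affineSpan ℝ (intrinsicInterior_subset hq)
  let K := affineSpanChart q ⁻¹' P
  have hKint : (interior K).Nonempty :=
    ⟨0, mem_interior_iff_mem_nhds.2 (affineSpanChart_preimage_mem_nhds hq)⟩
  have K_subset : K ⊆ closure (interior K) := by
    rw [(convex_affineSpanChart_preimage q hP).closure_interior_eq_closure_of_nonempty_interior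
      hKint]
    exact subset_closure
  calc P = affineSpanChart q '' K := (image_affineSpanChart_preimage q).symm
    _ ⊆ affineSpanChart q '' closure (interior K) := image_mono K_subset
    _ ⊆ closure (affineSpanChart q '' interior K) :=
      image_closure_subset_closure_image (affineSpanChart q).continuous
    _ = closure (intrinsicInterior ℝ P) := by rw [image_affineSpanChart_interior]

theorem eq_of_isExtreme_of_mem_intrinsicInterior (hF : IsExtreme ℝ P F) {x : E} (hxF : x ∈ F)
    (hx : x ∈ intrinsicInterior ℝ P) : F = P := by
  refine hF.subset.antisymm fun y hy => ?_
  lift x to affineSpan ℝ P using mem_affineSpan ℝ (intrinsicInterior_subset hx)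
  obtain ⟨v, hv, rfl⟩ := (image_affineSpanChart_preimage x).superset hy
  have htendsto : Filter.Tendsto (fun ε : ℝ => -(ε • v)) (𝓝[>] 0) (𝓝 0) := by
    have : ContinuousAt (fun ε : ℝ => -(ε • v)) 0 := by fun_prop
    simpa [ContinuousAt] using this.tendsto.mono_left nhdsWithin_le_nhds
  obtain ⟨ε, hεP, hε : 0 < ε⟩ := ((htendsto.eventually
    (affineSpanChart_preimage_mem_nhds hx)).and self_mem_nhdsWithin).exists
  have zero_mem : 0 ∈ openSegment ℝ v (-(ε • v)) :=
    ⟨ε / (1 + ε), 1 / (1 + ε), by positivity, by positivity, by field, by module⟩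
  have x_mem : (x : E) ∈ openSegment ℝ (affineSpanChart x v) (affineSpanChart x (-(ε • v))) := by
    rw [← affineSpanChart_zero x]
    exact (image_openSegment ℝ (affineSpanChart x).toAffineMap _ _).subset
      (mem_image_of_mem _ zero_mem)
  exact hF.left_mem_of_mem_openSegment hv hεP hxF x_mem

theorem exists_isExposed_ne_of_mem_intrinsicFrontier (hP : Convex ℝ P) (hPcl : IsClosed P)
    (hint : (intrinsicInterior ℝ P).Nonempty) {x : E} (hx : x ∈ intrinsicFrontier ℝ P) :
    ∃ F, IsExposed ℝ P F ∧ F ≠ P ∧ x ∈ F := by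
  obtain ⟨q, hq⟩ := hint
  lift q to affineSpan ℝ P using mem_affineSpan ℝ (intrinsicInterior_subset hq)
  have hK0 := affineSpanChart_preimage_mem_nhds hq
  have hxP : x ∈ P := intrinsicFrontier_subset hPcl hx
  rw [← image_affineSpanChart_frontier q] at hx
  obtain ⟨v, hv, rfl⟩ := hx
  obtain ⟨f, hf0, hf⟩ := geometric_hahn_banach_of_nonempty_interior_point
    (convex_affineSpanChart_preimage q hP) hv.2 ⟨0, mem_interior_iff_mem_nhds.2 hK0⟩
  obtain ⟨g, hg, -⟩ := exists_extension_norm_eq _ f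
  have g_chart (w : (affineSpan ℝ P).direction) : g (affineSpanChart q w) = f w + g q := by
    rw [affineSpanChart_apply, map_add, hg]
  refine ⟨g.toExposed P, ContinuousLinearMap.toExposed.isExposed, fun hFP => hf0 ?_, hxP,
    fun y hy => ?_⟩
  · have hmax : IsLocalMax f 0 := by
      filter_upwards [hK0] with w hw
      have := (hFP.superset (intrinsicInterior_subset hq)).2 _ hw
      simpa [g_chart] using this
    exact hmax.hasFDerivAt_eq_zero f.hasFDerivAt
  · obtain ⟨w, hw, rfl⟩ := (image_affineSpanChart_preimage q).superset hy
    simpa [g_chart] using hf w hw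

theorem isStrongDeformationRetract_intrinsicFrontier_sdiff {U : Set E} {q : E}
    (hP : Convex ℝ P) (hPc : IsCompact P) (hq : q ∈ intrinsicInterior ℝ P)
    (hU : StarConvex ℝ q U) (hqU : q ∈ U) :
    IsStrongDeformationRetract (intrinsicFrontier ℝ P \ U) (P \ U) := by
  lift q to affineSpan ℝ P using mem_affineSpan ℝ (intrinsicInterior_subset hq)
  let φ := affineSpanChart q
  have hbdd : Bornology.IsVonNBounded ℝ (φ ⁻¹' P) :=
    (NormedSpace.isVonNBounded_iff ℝ).2
      (φ.isometry.antilipschitz.isBounded_preimage hPc.isBounded)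
  have hstar : StarConvex ℝ 0 (φ ⁻¹' U) := by
    rw [← affineSpanChart_zero q] at hU
    exact hU.affine_preimage φ.toAffineMap
  have := (isStrongDeformationRetract_frontier_sdiff (convex_affineSpanChart_preimage q hP)
    (hPc.isClosed.preimage φ.continuous) hbdd (affineSpanChart_preimage_mem_nhds hq) hstar
    (by rwa [mem_preimage, affineSpanChart_zero])).image φ.isometry.isEmbedding
  rwa [image_sdiff_preimage, image_sdiff_preimage, image_affineSpanChart_frontier,
    image_affineSpanChart_preimage] at this

end IntrinsicInterior

namespace IsPolytope

variable {E : Type*} [AddCommGroup E] [Module ℝ E] {P : Set E}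

theorem convex (hP : IsPolytope P) : Convex ℝ P := by
  obtain ⟨S, rfl⟩ := hP
  exact convex_convexHull ℝ _

theorem finiteDimensional_direction_affineSpan (hP : IsPolytope P) :
    FiniteDimensional ℝ (affineSpan ℝ P).direction := by
  obtain ⟨S, rfl⟩ := hP
  rw [affineSpan_convexHull]
  exact finiteDimensional_direction_affineSpan_of_finite ℝ S.finite_toSet

theorem isCompact [TopologicalSpace E] [IsTopologicalAddGroup E] [ContinuousSMul ℝ E]
    (hP : IsPolytope P) : IsCompact P := by
  obtain ⟨S, rfl⟩ := hP
  exact S.finite_toSet.isCompact_convexHull ℝ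

end IsPolytope

section PolytopeComplex

variable {E : Type*} [NormedAddCommGroup E] [NormedSpace ℝ E] {P : Set E}

theorem IsPolytope.nonempty_intrinsicInterior (hP : IsPolytope P) (hne : P.Nonempty) :
    (intrinsicInterior ℝ P).Nonempty :=
  have := hP.finiteDimensional_direction_affineSpan
  _root_.nonempty_intrinsicInterior hP.convex hne

/-- A finite polytopal complex in a real normed space. Intersections of two members are only
required to be extreme subsets of each, which follows from being an exposed face. -/
structure IsPolytopeComplex (Ξ : Finset (Set E)) : Prop where
  isPolytope : ∀ P ∈ Ξ, IsPolytope P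
  mem_of_isExposed : ∀ P ∈ Ξ, ∀ F, IsExposed ℝ P F → F ∈ Ξ
  isExtreme_inter : ∀ P ∈ Ξ, ∀ P' ∈ Ξ, IsExtreme ℝ P (P ∩ P')

namespace IsPolytopeComplex

variable {Ξ : Finset (Set E)} {Q : Set E}

theorem isClosed_sUnion (hΞ : IsPolytopeComplex Ξ) : IsClosed (⋃₀ (Ξ : Set (Set E))) := by
  rw [sUnion_eq_biUnion]
  exact Ξ.finite_toSet.isClosed_biUnion fun P hP => (hΞ.isPolytope P hP).isCompact.isClosed

variable [DecidableEq (Set E)]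

theorem erase (hΞ : IsPolytopeComplex Ξ) (hP : Maximal (· ∈ Ξ) P) :
    IsPolytopeComplex (Ξ.erase P) where
  isPolytope R hR := hΞ.isPolytope R (Finset.mem_of_mem_erase hR)
  mem_of_isExposed R hR F hF := by
    obtain ⟨hRP, hR⟩ := Finset.mem_erase.1 hR
    have hFP : F ≠ P := fun hFP => hRP (hP.eq_of_ge hR (hFP ▸ hF.subset))
    exact Finset.mem_erase.2 ⟨hFP, hΞ.mem_of_isExposed R hR F hF⟩
  isExtreme_inter R hR R' hR' :=
    hΞ.isExtreme_inter R (Finset.mem_of_mem_erase hR) R' (Finset.mem_of_mem_erase hR')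

theorem inter_sUnion_erase (hΞ : IsPolytopeComplex Ξ) (hP : Maximal (· ∈ Ξ) P)
    (hne : P.Nonempty) :
    P ∩ ⋃₀ (Ξ.erase P : Set (Set E)) = intrinsicFrontier ℝ P := by
  have hPpoly := hΞ.isPolytope P hP.prop
  have hPcl := hPpoly.isCompact.isClosed
  apply Subset.antisymm
  · rintro x ⟨hxP, R, hR, hxR⟩
    obtain ⟨hRP, hR⟩ := Finset.mem_erase.1 hR
    have hx : x ∈ intrinsicInterior ℝ P ∪ intrinsicFrontier ℝ P := by
      rw [intrinsicInterior_union_intrinsicFrontier]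
      exact subset_intrinsicClosure hxP
    refine hx.resolve_left fun hxint => hRP (hP.eq_of_ge hR ?_)
    exact inter_eq_left.1 (eq_of_isExtreme_of_mem_intrinsicInterior
      (hΞ.isExtreme_inter P hP.prop R hR) ⟨hxP, hxR⟩ hxint)
  · intro x hx
    obtain ⟨F, hF, hFP, hxF⟩ := exists_isExposed_ne_of_mem_intrinsicFrontier hPpoly.convex hPcl
      (hPpoly.nonempty_intrinsicInterior hne) hx
    exact ⟨hF.subset hxF, F,
      Finset.mem_erase.2 ⟨hFP, hΞ.mem_of_isExposed P hP.prop F hF⟩, hxF⟩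

theorem isStrongDeformationRetract_sUnion_erase (hΞ : IsPolytopeComplex Ξ)
    (hP : Maximal (· ∈ Ξ) P) (hQo : IsOpen Q) (hQ : Convex ℝ Q) (hPQ : (P ∩ Q).Nonempty) :
    IsStrongDeformationRetract (⋃₀ (Ξ.erase P : Set (Set E)) \ Q)
      (⋃₀ (Ξ : Set (Set E)) \ Q) := by
  have hPpoly := hΞ.isPolytope P hP.prop
  have P_subset := subset_closure_intrinsicInterior hPpoly.convex
    (hPpoly.nonempty_intrinsicInterior hPQ.left)
  obtain ⟨q, hqP, hqQ⟩ : (intrinsicInterior ℝ P ∩ Q).Nonempty :=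
    (closure_inter_open_nonempty_iff hQo).1 (hPQ.mono (inter_subset_inter_left Q P_subset))
  have hcell : IsStrongDeformationRetract (intrinsicFrontier ℝ P \ Q) (P \ Q) :=
    isStrongDeformationRetract_intrinsicFrontier_sdiff hPpoly.convex hPpoly.isCompact hqP
      (hQ.starConvex hqQ) hqQ
  have hinter : P \ Q ∩ (⋃₀ (Ξ.erase P : Set (Set E)) \ Q) = intrinsicFrontier ℝ P \ Q := by
    rw [← hΞ.inter_sUnion_erase hP hPQ.left]
    exact inf_sdiff.symm
  have hunion : P \ Q ∪ ⋃₀ (Ξ.erase P : Set (Set E)) \ Q = ⋃₀ (Ξ : Set (Set E)) \ Q := by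
    rw [← union_sdiff_distrib, ← sUnion_insert, ← Finset.coe_insert, Finset.insert_erase hP.prop]
  rw [← hunion]
  exact hcell.union_of_isClosed (hPpoly.isCompact.isClosed.sdiff hQo)
    ((hΞ.erase hP).isClosed_sUnion.sdiff hQo) hinter

end IsPolytopeComplex

theorem statement1_general {Ξ : Finset (Set E)} (hΞ : IsPolytopeComplex Ξ) {Q : Set E}
    (hQo : IsOpen Q) (hQ : Convex ℝ Q) :
    IsStrongDeformationRetract (⋃₀ {P | P ∈ Ξ ∧ P ∩ Q = ∅}) (⋃₀ (Ξ : Set (Set E)) \ Q) := by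
  classical
  induction Ξ using Finset.strongInduction with
  | H Ξ ih =>
    by_cases hmeet : ∃ R ∈ Ξ, (R ∩ Q).Nonempty
    · obtain ⟨R, hR, hRQ⟩ := hmeet
      obtain ⟨P, hRP, hP⟩ := Ξ.exists_le_maximal hR
      have hPQ : (P ∩ Q).Nonempty := hRQ.mono (inter_subset_inter_left Q hRP)
      have hsets : {R | R ∈ Ξ ∧ R ∩ Q = ∅} = {R | R ∈ Ξ.erase P ∧ R ∩ Q = ∅} := by
        grind [Set.Nonempty]
      rw [hsets]
      exact (ih _ (Finset.erase_ssubset hP.prop) (hΞ.erase hP)).trans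
        (hΞ.isStrongDeformationRetract_sUnion_erase hP hQo hQ hPQ)
    · push Not at hmeet
      have hsets : {R | R ∈ Ξ ∧ R ∩ Q = ∅} = (Ξ : Set (Set E)) :=
        Set.ext fun R => and_iff_left_of_imp (hmeet R)
      have hdisj : Disjoint (⋃₀ (Ξ : Set (Set E))) Q :=
        disjoint_sUnion_left.2 fun R hR => disjoint_iff_inter_eq_empty.2 (hmeet R hR)
      rw [hsets, hdisj.sdiff_eq_left]
      exact .refl _

end PolytopeComplex

/-- For a finite polytopal complex `Ξ` and an open convex set `Q`, the union of the members
of `Ξ` disjoint from `Q` is a strong deformation retract of `(⋃ Ξ) \ Q`. -/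
theorem statement1 {d : ℕ} (Ξ : Finset (Set (EuclideanSpace ℝ (Fin d))))
    (hΞ : IsPolytopalComplex Ξ)
    (Q : Set (EuclideanSpace ℝ (Fin d))) (hQo : IsOpen Q) (hQconv : Convex ℝ Q) :
    IsStrongDeformationRetract
      (⋃₀ {P : Set (EuclideanSpace ℝ (Fin d)) | P ∈ Ξ ∧ P ∩ Q = ∅})
      ((⋃₀ (Ξ : Set (Set (EuclideanSpace ℝ (Fin d))))) \ Q) :=
  statement1_general
    ⟨hΞ.1, hΞ.2.1, fun P hP P' hP' => (hΞ.2.2 P hP P' hP').1.isExtreme⟩ hQo hQconv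
end

section
/- Let P, Q ⊆ ℝ^d be polytopes with P ∩ Q ≠ ∅. Then (∂P) \ Q is homotopy equivalent to P \ Q. -/
/-!
Work in the affine span of `P`, with the origin at a relative interior point of `P` that lies in
`Q` if possible, and project radially from the origin to the boundary of `P`.

If the origin lies in `Q`, then moving away from it never enters `Q`, so the projection retracts
`P \ Q` onto `∂P \ Q` along segments. Otherwise `Q` misses the interior of `P`, and both sets are
contractible: `P \ Q` is star-shaped about the origin, and `∂P \ Q` is the radial retract of the
complement of the cone over `P ∩ Q`, which is star-shaped about `-k` for every `k ∈ P ∩ Q`.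
-/

open Set Topology Bornology
open scoped ContinuousMap Pointwise

section ConvexCone

variable {𝕜 E : Type*} [Field 𝕜] [LinearOrder 𝕜] [IsStrictOrderedRing 𝕜]

lemma smul_mem_Ici_smul_iff [MulAction 𝕜 E] {s : Set E} {x : E} {t : 𝕜} (ht : 0 < t) :
    t • x ∈ Ici (0 : 𝕜) • s ↔ x ∈ Ici (0 : 𝕜) • s := by
  have smul_mem : ∀ {r : 𝕜} {y : E}, 0 < r → y ∈ Ici (0 : 𝕜) • s → r • y ∈ Ici (0 : 𝕜) • s := by
    rintro r _ hr ⟨c, hc, q, hq, rfl⟩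
    exact ⟨r * c, mul_nonneg hr.le hc, q, hq, mul_smul r c q⟩
  refine ⟨fun h => ?_, smul_mem ht⟩
  simpa only [inv_smul_smul₀ ht.ne'] using smul_mem (inv_pos.2 ht) h

variable [AddCommGroup E] [Module 𝕜 E] {K : Set E}

lemma neg_notMem_Ici_smul (hK : Convex 𝕜 K) (h0 : (0 : E) ∉ K) {k : E} (hk : k ∈ K) :
    -k ∉ Ici (0 : 𝕜) • K := by
  intro hmem
  obtain ⟨t, ht, q, hq, htq⟩ := mem_smul.1 hmem
  have hpos : 0 < 1 + t := add_pos_of_pos_of_nonneg one_pos ht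
  have hzero : (0 : E) ∈ (1 + t) • K := by
    rw [hK.add_smul zero_le_one ht, one_smul]
    exact ⟨k, hk, t • q, smul_mem_smul_set hq, by simp only [htq, add_neg_cancel]⟩
  exact h0 ((zero_mem_smul_set_iff hpos.ne').1 hzero)

lemma starConvex_neg_compl_Ici_smul (hK : Convex 𝕜 K) (h0 : (0 : E) ∉ K) {k : E} (hk : k ∈ K) :
    StarConvex 𝕜 (-k) (Ici (0 : 𝕜) • K)ᶜ := by
  intro y hy a b ha hb hab hmem
  rcases hb.eq_or_lt with rfl | hb
  · rw [add_zero] at hab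
    rw [hab, one_smul, zero_smul, add_zero] at hmem
    exact neg_notMem_Ici_smul hK h0 hk hmem
  · obtain ⟨t, ht, q, hq, htq⟩ := mem_smul.1 hmem
    have hsum : b • y ∈ (a + t) • K := by
      rw [hK.add_smul ha ht]
      exact ⟨a • k, smul_mem_smul_set hk, t • q, smul_mem_smul_set hq, by
        simp only [htq, smul_neg, add_neg_cancel_left]⟩
    obtain ⟨w, hw, hwy⟩ := hsum
    exact hy ((smul_mem_Ici_smul_iff hb).1 (hwy ▸ smul_mem_smul (add_nonneg ha ht) hw))

end ConvexCone

section TopologicalVectorSpace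

variable {E : Type*} [AddCommGroup E] [Module ℝ E] [TopologicalSpace E] [IsTopologicalAddGroup E]
  [ContinuousSMul ℝ E]

lemma starConvex_diff_of_mem_interior {P Q : Set E} (hP : Convex ℝ P)
    (hPQ : Disjoint (interior P) Q) {p : E} (hp : p ∈ interior P) : StarConvex ℝ p (P \ Q) := by
  intro x hx a b ha hb hab
  rcases ha.eq_or_lt with rfl | ha
  · rw [zero_add] at hab
    rwa [hab, one_smul, zero_smul, zero_add]
  · have hint : a • p + b • x ∈ interior P :=
      hP.combo_interior_self_mem_interior hp hx.1 ha hb hab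
    exact ⟨interior_subset hint, hPQ.notMem_of_mem_left hint⟩

theorem nonempty_homotopyEquiv_of_segment_subset {A B : Set E} {r : E → E} (hAB : A ⊆ B)
    (hr : ContinuousOn r B) (hrA : MapsTo r B A) (hid : EqOn r id A)
    (hseg : ∀ x ∈ B, segment ℝ x (r x) ⊆ B) : Nonempty (A ≃ₕ B) := by
  let retraction : C(B, A) := ⟨hrA.restrict r B A, hr.mapsToRestrict hrA⟩
  let inclusion : C(A, B) := ⟨Set.inclusion hAB, continuous_inclusion hAB⟩
  have hretract : retraction.comp inclusion = .id A := by
    ext x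
    exact hid x.2
  have hdeform : (ContinuousMap.id B).Homotopic (inclusion.comp retraction) := by
    let H := ContinuousMap.Homotopy.affine (⟨(↑), continuous_subtype_val⟩ : C(B, E))
      ⟨fun x => r x, hr.domRestrict⟩
    have hH : ∀ p, H p ∈ B := fun p => hseg p.2 p.2.2 <| by
      rw [segment_eq_image_lineMap]
      exact mem_image_of_mem _ p.1.2
    exact ⟨⟨⟨fun p => ⟨H p, hH p⟩, H.continuous.subtype_mk hH⟩,
      fun x => Subtype.ext (H.apply_zero x), fun x => Subtype.ext (H.apply_one x)⟩⟩
  exact ⟨inclusion, retraction, hretract ▸ .refl _, hdeform.symm⟩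

end TopologicalVectorSpace

section RadialProjection

variable {E : Type*} [AddCommGroup E] [Module ℝ E]

/-- The radial projection from the origin onto the boundary of a bounded convex neighbourhood `P` of
the origin: the rescaling of `x` to gauge `1`. It sends `0` to `0`. -/
noncomputable def radialProjection (P : Set E) (x : E) : E := (gauge P x)⁻¹ • x

lemma segment_radialProjection (P : Set E) (x : E) :
    segment ℝ x (radialProjection P x) = (· • x) '' segment ℝ 1 (gauge P x)⁻¹ := by
  have := image_segment ℝ (LinearMap.toSpanSingleton ℝ E x).toAffineMap 1 (gauge P x)⁻¹
  simpa [radialProjection] using this.symm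

variable [TopologicalSpace E] [IsTopologicalAddGroup E] [ContinuousSMul ℝ E] {P Q : Set E}

lemma radialProjection_of_mem_frontier (hP : Convex ℝ P) (h0 : P ∈ 𝓝 0) {x : E}
    (hx : x ∈ frontier P) : radialProjection P x = x := by
  rw [radialProjection, (gauge_eq_one_iff_mem_frontier hP h0).2 hx, inv_one, one_smul]

lemma frontier_diff_eq_inter_compl_Ici_smul (hP : Convex ℝ P) (hPc : IsClosed P) (h0 : P ∈ 𝓝 0)
    (hPQ : Disjoint (interior P) Q) :
    frontier P \ Q = frontier P ∩ (Ici (0 : ℝ) • (P ∩ Q))ᶜ := by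
  ext x
  refine and_congr_right fun hx => not_congr ⟨fun hxQ => ?_, fun hcone => ?_⟩
  · exact mem_smul.2 ⟨1, mem_Ici.2 zero_le_one, x, ⟨hPc.frontier_subset hx, hxQ⟩, one_smul ℝ x⟩
  · obtain ⟨t, ht, q, ⟨hqP, hqQ⟩, rfl⟩ := mem_smul.1 hcone
    have hq : q ∈ frontier P := ⟨subset_closure hqP, hPQ.notMem_of_mem_right hqQ⟩
    have ht1 : t = 1 := by
      rw [← gauge_eq_one_iff_mem_frontier hP h0] at hx hq
      rwa [gauge_smul_of_nonneg (mem_Ici.1 ht), hq, smul_eq_mul, mul_one] at hx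
    rwa [ht1, one_smul]

variable [T1Space E]

lemma radialProjection_mem_frontier (hP : Convex ℝ P) (h0 : P ∈ 𝓝 0) (hb : IsVonNBounded ℝ P)
    {x : E} (hx : x ≠ 0) : radialProjection P x ∈ frontier P := by
  have hpos := (gauge_pos (absorbent_nhds_zero h0) hb).2 hx
  rw [← gauge_eq_one_iff_mem_frontier hP h0, radialProjection,
    gauge_smul_of_nonneg (inv_nonneg.2 hpos.le), smul_eq_mul, inv_mul_cancel₀ hpos.ne']

lemma continuousOn_radialProjection (hP : Convex ℝ P) (h0 : P ∈ 𝓝 0) (hb : IsVonNBounded ℝ P) :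
    ContinuousOn (radialProjection P) {0}ᶜ :=
  ((continuous_gauge hP h0).continuousOn.inv₀
    fun _ hx => ((gauge_pos (absorbent_nhds_zero h0) hb).2 hx).ne').smul continuousOn_id

theorem nonempty_homotopyEquiv_frontier_inter (hP : Convex ℝ P) (h0 : P ∈ 𝓝 0)
    (hb : IsVonNBounded ℝ P) {B : Set E} (hB0 : (0 : E) ∉ B)
    (hB : ∀ x ∈ B, segment ℝ x (radialProjection P x) ⊆ B) :
    Nonempty (↥(frontier P ∩ B) ≃ₕ B) := by
  have hne : ∀ x ∈ B, x ≠ 0 := fun x hx => ne_of_mem_of_not_mem hx hB0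
  exact nonempty_homotopyEquiv_of_segment_subset inter_subset_right
    ((continuousOn_radialProjection hP h0 hb).mono hne)
    (fun x hx => ⟨radialProjection_mem_frontier hP h0 hb (hne x hx),
      hB x hx (right_mem_segment ℝ _ _)⟩)
    (fun x hx => radialProjection_of_mem_frontier hP h0 hx.1) hB

lemma contractibleSpace_frontier_diff (hP : Convex ℝ P) (hPc : IsClosed P)
    (hb : IsVonNBounded ℝ P) (h0 : P ∈ 𝓝 0) (hQ : Convex ℝ Q) (hPQ : Disjoint (interior P) Q)
    (hne : (P ∩ Q).Nonempty) : ContractibleSpace ↥(frontier P \ Q) := by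
  obtain ⟨k, hk⟩ := hne
  let D : Set E := (Ici (0 : ℝ) • (P ∩ Q))ᶜ
  have h0K : (0 : E) ∉ P ∩ Q := fun h =>
    hPQ.notMem_of_mem_left (mem_interior_iff_mem_nhds.2 h0) h.2
  have h0D : (0 : E) ∉ D := notMem_compl_iff.2 (mem_smul.2 ⟨0, self_mem_Ici, k, hk, zero_smul ℝ k⟩)
  have hKconv : Convex ℝ (P ∩ Q) := hP.inter hQ
  have hD : StarConvex ℝ (-k) D := starConvex_neg_compl_Ici_smul hKconv h0K hk
  have hseg : ∀ x ∈ D, segment ℝ x (radialProjection P x) ⊆ D := by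
    intro x hx
    have hinv := inv_pos.2 ((gauge_pos (absorbent_nhds_zero h0) hb).2 (ne_of_mem_of_not_mem hx h0D))
    rw [segment_radialProjection, image_subset_iff]
    exact fun t ht h => hx ((smul_mem_Ici_smul_iff
      ((convex_Ioi (0 : ℝ)).segment_subset (mem_Ioi.2 one_pos) hinv ht)).1 h)
  obtain ⟨e⟩ := nonempty_homotopyEquiv_frontier_inter hP h0 hb h0D hseg
  rw [frontier_diff_eq_inter_compl_Ici_smul hP hPc h0 hPQ]
  have := hD.contractibleSpace ⟨-k, neg_notMem_Ici_smul hKconv h0K hk⟩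
  exact e.contractibleSpace

theorem nonempty_homotopyEquiv_frontier_diff_of_zero_mem (hP : Convex ℝ P) (hPc : IsClosed P)
    (hb : IsVonNBounded ℝ P) (h0 : P ∈ 𝓝 0) (hQ : Convex ℝ Q) (h0Q : (0 : E) ∈ Q) :
    Nonempty (↥(frontier P \ Q) ≃ₕ ↥(P \ Q)) := by
  have hinter : frontier P ∩ (P \ Q) = frontier P \ Q := by
    rw [← inter_sdiff_assoc, inter_eq_left.2 hPc.frontier_subset]
  rw [← hinter]
  refine nonempty_homotopyEquiv_frontier_inter hP h0 hb (fun h => h.2 h0Q) fun x hx z hz => ?_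
  have hx0 : x ≠ 0 := fun h => hx.2 (h ▸ h0Q)
  have hproj := hPc.frontier_subset (radialProjection_mem_frontier hP h0 hb hx0)
  refine ⟨hP.segment_subset hx.1 hproj hz, fun hzQ => hx.2 ?_⟩
  rw [segment_radialProjection] at hz
  obtain ⟨t, ht, rfl⟩ := hz
  have hinv : 1 ≤ (gauge P x)⁻¹ :=
    one_le_inv_iff₀.2 ⟨(gauge_pos (absorbent_nhds_zero h0) hb).2 hx0, gauge_le_one_of_mem hx.1⟩
  have ht1 : 1 ≤ t := (convex_Ici (1 : ℝ)).segment_subset self_mem_Ici hinv ht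
  have ht0 : 0 < t := zero_lt_one.trans_le ht1
  simpa only [inv_smul_smul₀ ht0.ne'] using
    (hQ.starConvex h0Q).smul_mem hzQ (inv_nonneg.2 ht0.le) (inv_le_one_of_one_le₀ ht1)

theorem nonempty_homotopyEquiv_frontier_diff_of_disjoint (hP : Convex ℝ P) (hPc : IsClosed P)
    (hb : IsVonNBounded ℝ P) (h0 : P ∈ 𝓝 0) (hQ : Convex ℝ Q) (hPQ : Disjoint (interior P) Q)
    (hne : (P ∩ Q).Nonempty) : Nonempty (↥(frontier P \ Q) ≃ₕ ↥(P \ Q)) := by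
  have h0int : (0 : E) ∈ interior P := mem_interior_iff_mem_nhds.2 h0
  have := contractibleSpace_frontier_diff hP hPc hb h0 hQ hPQ hne
  have := (starConvex_diff_of_mem_interior hP hPQ h0int).contractibleSpace
    ⟨0, interior_subset h0int, hPQ.notMem_of_mem_left h0int⟩
  exact ContractibleSpace.hequiv _ _

theorem nonempty_homotopyEquiv_frontier_diff (hP : Convex ℝ P) (hPc : IsClosed P)
    (hb : IsVonNBounded ℝ P) (h0 : P ∈ 𝓝 0) (hQ : Convex ℝ Q) (hne : (P ∩ Q).Nonempty)
    (h0Q : (0 : E) ∈ Q ∨ Disjoint (interior P) Q) :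
    Nonempty (↥(frontier P \ Q) ≃ₕ ↥(P \ Q)) :=
  h0Q.elim (nonempty_homotopyEquiv_frontier_diff_of_zero_mem hP hPc hb h0 hQ)
    fun hPQ => nonempty_homotopyEquiv_frontier_diff_of_disjoint hP hPc hb h0 hQ hPQ hne

end RadialProjection

section Intrinsic

variable {𝕜 V E X : Type*} [Ring 𝕜] [AddCommGroup V] [Module 𝕜 V] [TopologicalSpace E]
  [AddTorsor V E] [TopologicalSpace X] {P : Set E}

lemma intrinsicInterior_eq_image_interior (e : X ≃ₜ affineSpan 𝕜 P) :
    intrinsicInterior 𝕜 P = (Subtype.val ∘ e) '' interior ((Subtype.val ∘ e) ⁻¹' P) := by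
  rw [preimage_comp, ← e.preimage_interior, image_comp, image_preimage_eq _ e.surjective,
    intrinsicInterior]

lemma intrinsicFrontier_eq_image_frontier (e : X ≃ₜ affineSpan 𝕜 P) :
    intrinsicFrontier 𝕜 P = (Subtype.val ∘ e) '' frontier ((Subtype.val ∘ e) ⁻¹' P) := by
  rw [preimage_comp, ← e.preimage_frontier, image_comp, image_preimage_eq _ e.surjective,
    intrinsicFrontier]

end Intrinsic

section FiniteDimensional

variable {E : Type*} [NormedAddCommGroup E] [NormedSpace ℝ E] [FiniteDimensional ℝ E] {P Q : Set E}

lemma exists_mem_intrinsicInterior_mem_or_disjoint (hP : Convex ℝ P) (hne : P.Nonempty)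
    (Q : Set E) :
    ∃ p ∈ intrinsicInterior ℝ P, p ∈ Q ∨ Disjoint (intrinsicInterior ℝ P) Q := by
  by_cases hdisj : Disjoint (intrinsicInterior ℝ P) Q
  · exact (hne.intrinsicInterior hP).imp fun p hp => ⟨hp, .inr hdisj⟩
  · exact (not_disjoint_iff.1 hdisj).imp fun p hp => ⟨hp.1, .inl hp.2⟩

lemma exists_affine_parametrization_affineSpan {p : E} (hp : p ∈ affineSpan ℝ P) :
    ∃ f : (affineSpan ℝ P).direction →ᵃ[ℝ] E, IsClosedEmbedding f ∧ f 0 = p ∧ P ⊆ range f ∧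
      intrinsicInterior ℝ P = f '' interior (f ⁻¹' P) ∧
      intrinsicFrontier ℝ P = f '' frontier (f ⁻¹' P) := by
  have : Nonempty (affineSpan ℝ P) := ⟨⟨p, hp⟩⟩
  let e := Homeomorph.vaddConst (⟨p, hp⟩ : affineSpan ℝ P)
  let f : (affineSpan ℝ P).direction →ᵃ[ℝ] E :=
    (affineSpan ℝ P).subtype.comp (AffineEquiv.vaddConst ℝ ⟨p, hp⟩).toAffineMap
  have hf : IsClosedEmbedding f :=
    (affineSpan ℝ P).closed_of_finiteDimensional.isClosedEmbedding_subtypeVal.comp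
      e.isClosedEmbedding
  have hf0 : f 0 = p := by simp [f]
  have hrange : P ⊆ range f := fun x hx =>
    ⟨e.symm ⟨x, subset_affineSpan ℝ P hx⟩, congrArg Subtype.val (e.apply_symm_apply _)⟩
  exact ⟨f, hf, hf0, hrange, intrinsicInterior_eq_image_interior e,
    intrinsicFrontier_eq_image_frontier e⟩

theorem statement4_general (hP : Convex ℝ P) (hPc : IsCompact P) (hQ : Convex ℝ Q)
    (hPQ : (P ∩ Q).Nonempty) : Nonempty (↥(intrinsicFrontier ℝ P \ Q) ≃ₕ ↥(P \ Q)) := by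
  obtain ⟨p, hp, hpQ⟩ := exists_mem_intrinsicInterior_mem_or_disjoint hP hPQ.left Q
  obtain ⟨f, hf, rfl, hrange, hint, hfr⟩ :=
    exists_affine_parametrization_affineSpan (subset_affineSpan ℝ P (intrinsicInterior_subset hp))
  rw [hint, hf.injective.mem_set_image, mem_interior_iff_mem_nhds] at hp
  rw [hint, disjoint_image_left] at hpQ
  have hcompact : IsCompact (f ⁻¹' P) := hf.isCompact_preimage hPc
  have hmeet : (f ⁻¹' P ∩ f ⁻¹' Q).Nonempty := by
    obtain ⟨c, hcP, hcQ⟩ := hPQ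
    obtain ⟨v, rfl⟩ := hrange hcP
    exact ⟨v, hcP, hcQ⟩
  obtain ⟨g⟩ := nonempty_homotopyEquiv_frontier_diff (hP.affine_preimage f) hcompact.isClosed
    (hcompact.isVonNBounded ℝ) hp (hQ.affine_preimage f) hmeet hpQ
  have hPdiff : f '' (f ⁻¹' P \ f ⁻¹' Q) = P \ Q := by
    rw [image_sdiff_preimage, image_preimage_eq_of_subset hrange]
  have hfrdiff : f '' (frontier (f ⁻¹' P) \ f ⁻¹' Q) = intrinsicFrontier ℝ P \ Q := by
    rw [image_sdiff_preimage, hfr]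
  rw [← hfrdiff, ← hPdiff]
  exact ⟨(hf.homeomorphImage _).symm.toHomotopyEquiv.trans
    (g.trans (hf.homeomorphImage _).toHomotopyEquiv)⟩

end FiniteDimensional

/-- For polytopes `P, Q ⊆ ℝ^d` with `P ∩ Q ≠ ∅`, the set `(∂P) \ Q` is homotopy
equivalent to `P \ Q` (where `∂P` is the relative, i.e. intrinsic, boundary of `P`). -/
theorem statement4 {d : ℕ} (P Q : Set (EuclideanSpace ℝ (Fin d)))
    (hP : IsPolytope P) (hQ : IsPolytope Q) (hPQ : (P ∩ Q).Nonempty) :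
    Nonempty (ContinuousMap.HomotopyEquiv ↥(intrinsicFrontier ℝ P \ Q) ↥(P \ Q)) := by
  obtain ⟨⟨S, rfl⟩, ⟨T, rfl⟩⟩ := And.intro hP hQ
  exact statement4_general (convex_convexHull ℝ _) (S.finite_toSet.isCompact_convexHull ℝ)
    (convex_convexHull ℝ _) hPQ
end
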